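/- arXiv:1109.5086 — 3 statements merged into one kernel-verified Lean document; each statement's English description precedes it below -/
import Mathlib

section
/- For any integers L_0 ≥ 1 and l_0 > 2·l(d), there exists p < 1 such that for all n ≥ 0, P[D̄_{0,n}(B̃^p)] ≤ 2^{−2^n}. -/
open MeasureTheory
open scoped ENNReal

namespace RIQ

/-- The vertex set of the lattice `ℤ^d`. -/
abbrev V (d : ℕ) := Fin d → ℤ

/-- Nearest-neighbour adjacency on `ℤ^d` (`ℓ¹`-distance one). -/
def adj {d : ℕ} (x y : V d) : Prop := (∑ i, (x i - y i).natAbs) = 1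

/-- The `ℓ^∞` norm of a lattice point. -/
def normInf {d : ℕ} (x : V d) : ℕ := Finset.univ.sup fun i => (x i).natAbs

/-- `x` and `y` are connected by a nearest-neighbour path inside the set of sites `S`. -/
def SConn {d : ℕ} (S : Set (V d)) (x y : V d) : Prop :=
  ∃ (n : ℕ) (p : ℕ → V d), p 0 = x ∧ p n = y ∧ (∀ i ≤ n, p i ∈ S) ∧
    ∀ i < n, adj (p i) (p (i + 1))

/-- `x` lies in an infinite connected component of the set of sites `S`. -/
def SInf {d : ℕ} (S : Set (V d)) (x : V d) : Prop := {y | SConn S x y}.Infinite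

/-- `x` and `y` are connected by a nearest-neighbour path all of whose edges lie in the
edge set `E`. -/
def EConn {d : ℕ} (E : Set (Sym2 (V d))) (x y : V d) : Prop :=
  ∃ (n : ℕ) (p : ℕ → V d), p 0 = x ∧ p n = y ∧
    ∀ i < n, adj (p i) (p (i + 1)) ∧ s(p i, p (i + 1)) ∈ E

/-- `x` lies in an infinite connected component of the graph with edge set `E`. -/
def EInf {d : ℕ} (E : Set (Sym2 (V d))) (x : V d) : Prop := {y | EConn E x y}.Infinite

/-- The edges of `E` having both endpoints in the set of sites `B`. -/
def edgesIn {d : ℕ} (E : Set (Sym2 (V d))) (B : Set (V d)) : Set (Sym2 (V d)) :=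
  {e | e ∈ E ∧ ∀ v ∈ e, v ∈ B}

/-- Connectivity in the graph `E` restricted to the vertex set `B`. -/
def EConnOn {d : ℕ} (E : Set (Sym2 (V d))) (B : Set (V d)) (x y : V d) : Prop :=
  EConn (edgesIn E B) x y

/-- The connected component of `x` in the graph `E` restricted to the vertex set `B`. -/
def comp {d : ℕ} (E : Set (Sym2 (V d))) (B : Set (V d)) (x : V d) : Set (V d) :=
  {y | EConnOn E B x y}

/-- The unit step of a simple random walk encoded by a coordinate and a sign. -/
def stepVec (d : ℕ) (s : Fin d × Bool) : V d :=
  fun i => if i = s.1 then (if s.2 then 1 else -1) else 0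

/-- The position after `t` steps of the walk started at `x` with steps `s`. -/
def walkPos {d n : ℕ} (x : V d) (s : Fin n → Fin d × Bool) (t : ℕ) : V d :=
  x + ∑ m : Fin n, if (m : ℕ) < t then stepVec d (s m) else 0

/-- The probability that simple random walk started at `x` avoids `K` at times `1, …, n`. -/
noncomputable def escProbUpTo (d : ℕ) (K : Set (V d)) (x : V d) (n : ℕ) : ℝ :=
  (Nat.card {s : Fin n → Fin d × Bool // ∀ t : Fin n, walkPos x s ((t : ℕ) + 1) ∉ K} : ℝ) /
    ((2 * d : ℕ) : ℝ) ^ n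

/-- The probability that simple random walk started at `x` never returns to `K`
(escape probability); for `x ∈ K` this is the equilibrium measure `e_K(x)`. -/
noncomputable def esc (d : ℕ) (K : Set (V d)) (x : V d) : ℝ := ⨅ n : ℕ, escProbUpTo d K x n

/-- The (simple random walk) capacity of a finite set `K ⊆ ℤ^d`. -/
noncomputable def cap (d : ℕ) (K : Finset (V d)) : ℝ := ∑ x ∈ K, esc d (↑K) x

/-- The Green function `g(0)` of simple random walk on `ℤ^d` at the origin. -/
noncomputable def green0 (d : ℕ) : ℝ :=
  ∑' n : ℕ, (Nat.card {s : Fin n → Fin d × Bool // walkPos (0 : V d) s n = 0} : ℝ) /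
    ((2 * d : ℕ) : ℝ) ^ n

/-- The density `m(u) = P[0 ∈ I^u] = 1 - exp (-u / g(0))` of the interlacement at level `u`. -/
noncomputable def density (d : ℕ) (u : ℝ) : ℝ := 1 - Real.exp (-u / green0 d)

/-- A model of the random interlacements point process on `ℤ^d`, `d ≥ 3`:
a probability space carrying, for every level `u`, the random interlacement graph
`Ĩ^u ⊆ E^d` (the set of edges traversed by at least one trajectory of the interlacement
Poisson point process `Pois(u, W*)`).  The fields record the basic properties of this
family: edges of `Ĩ^u` are genuine lattice edges, the processes are coupled monotonically
in `u`, the law of the interlacement set `I^u` (the set of endpoints of edges of `Ĩ^u`)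
is characterised by `P[I^u ∩ K = ∅] = exp(-u cap(K))`, and the process is invariant and
ergodic under lattice translations. -/
structure InterlacementModel (d : ℕ) (Ω : Type) [MeasurableSpace Ω] where
  P : Measure Ω
  prob : IsProbabilityMeasure P
  Iedge : ℝ → Ω → Set (Sym2 (V d))
  edge_adj : ∀ (u : ℝ) (ω : Ω) (x y : V d), s(x, y) ∈ Iedge u ω → adj x y
  mono : ∀ u u' : ℝ, u ≤ u' → ∀ ω : Ω, Iedge u ω ⊆ Iedge u' ω
  law : ∀ u : ℝ, 0 < u → ∀ K : Finset (V d),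
    P {ω | ∀ x ∈ K, ∀ y : V d, s(x, y) ∉ Iedge u ω} =
      ENNReal.ofReal (Real.exp (-u * cap d K))
  shift : V d → Ω → Ω
  shift_pres : ∀ z : V d, MeasurePreserving (shift z) P P
  shift_eq : ∀ (z : V d) (u : ℝ) (ω : Ω),
    Iedge u (shift z ω) = Sym2.map (fun x => x + z) ⁻¹' Iedge u ω
  erg : ∀ z : V d, z ≠ 0 → Ergodic (shift z) P

/-- The random interlacement `I^u ⊆ ℤ^d`: the set of vertices incident to an edge of the
interlacement graph `Ĩ^u`. -/
def Isite {d : ℕ} {Ω : Type} [MeasurableSpace Ω] (M : InterlacementModel d Ω) (u : ℝ)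
    (ω : Ω) : Set (V d) := {x | ∃ y : V d, s(x, y) ∈ M.Iedge u ω}

/-- The vacant set `V^u = ℤ^d \ I^u`. -/
def Vsite {d : ℕ} {Ω : Type} [MeasurableSpace Ω] (M : InterlacementModel d Ω) (u : ℝ)
    (ω : Ω) : Set (V d) := (Isite M u ω)ᶜ

/-- `μ` is the Bernoulli product measure with parameter `p` on configurations `E → Bool`:
cylinder events have the i.i.d. Bernoulli probabilities. -/
def IsBernoulliProduct {E : Type*} (p : ℝ) (μ : Measure (E → Bool)) : Prop :=
  IsProbabilityMeasure μ ∧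
  ∀ (F : Finset E) (σ : E → Bool),
    μ {η | ∀ e ∈ F, η e = σ e} = ∏ e ∈ F, ENNReal.ofReal (if σ e then p else 1 - p)

/-- The box `x + [0, L)^d`. -/
def box {d : ℕ} (x : V d) (L : ℕ) : Set (V d) := {y | ∀ i, x i ≤ y i ∧ y i < x i + (L : ℤ)}

/-- The `ℓ^∞` ball `B(x, r)`. -/
def ballInf {d : ℕ} (x : V d) (r : ℕ) : Set (V d) := {y | normInf (y - x) ≤ r}

/-- The constant `l(d) = 30 · 4^d`. -/
def ld (d : ℕ) : ℕ := 30 * 4 ^ d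

/-- The length scales `L_n = l_0^n L_0`. -/
def Ln (l0 L0 n : ℕ) : ℕ := l0 ^ n * L0

/-- The renormalised lattice `G = L ℤ^d`. -/
def grid {d : ℕ} (L : ℕ) : Set (V d) := {x | ∀ i, (L : ℤ) ∣ x i}

/-- `Λ_{x,n} = G_{n-1} ∩ (x + [0, L_n)^d)`. -/
def lam {d : ℕ} (l0 L0 n : ℕ) (x : V d) : Set (V d) :=
  grid (Ln l0 L0 (n - 1)) ∩ box x (Ln l0 L0 n)

/-- The recursively defined cascading events `Ḡ_{x,n}` built from the seed events `G0`. -/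
def cascade (d l0 L0 : ℕ) (G0 : V d → Set (Set (Sym2 (V d)))) :
    ℕ → V d → Set (Set (Sym2 (V d)))
  | 0 => G0
  | n + 1 => fun x =>
      {G | ∃ x1 ∈ lam l0 L0 (n + 1) x, ∃ x2 ∈ lam l0 L0 (n + 1) x,
        Ln l0 L0 (n + 1) < ld d * normInf (x1 - x2) ∧
        G ∈ cascade d l0 L0 G0 n x1 ∧ G ∈ cascade d l0 L0 G0 n x2}

def IncreasingEv {d : ℕ} (A : Set (Set (Sym2 (V d)))) : Prop :=
  ∀ G G' : Set (Sym2 (V d)), G ⊆ G' → G ∈ A → G' ∈ A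
def DecreasingEv {d : ℕ} (A : Set (Set (Sym2 (V d)))) : Prop :=
  ∀ G G' : Set (Sym2 (V d)), G ⊆ G' → G' ∈ A → G ∈ A

/-- The event `A` depends only on the states of edges with both endpoints in `B`. -/
def DependsOn {d : ℕ} (A : Set (Set (Sym2 (V d)))) (B : Set (V d)) : Prop :=
  ∀ G G' : Set (Sym2 (V d)),
    (∀ e : Sym2 (V d), (∀ v ∈ e, v ∈ B) → (e ∈ G ↔ e ∈ G')) → (G ∈ A ↔ G' ∈ A)

/-- The box `x + [-L₀, 3 L₀)^d` carrying a seed event. -/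
def seedBox {d : ℕ} (x : V d) (L0 : ℕ) : Set (V d) :=
  {y | ∀ i, x i - (L0 : ℤ) ≤ y i ∧ y i < x i + 3 * (L0 : ℤ)}

/-- The sub-box `x + e L₀ + [0, L₀)^d` for `e ∈ {0,1}^d`. -/
def offsetBox {d : ℕ} (x : V d) (e : Fin d → Bool) (L0 : ℕ) : Set (V d) :=
  box (fun i => x i + if e i then (L0 : ℤ) else 0) L0

/-- The good increasing seed event `E_x^u` (with `mv = m(u)`): every sub-box
`x + e L₀ + [0, L₀)^d` contains a connected component with at least `(3/4) m(u) L₀^d`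
vertices, and all these components are connected within `x + [0, 2 L₀)^d`. -/
def eventE (d L0 : ℕ) (mv : ℝ) (x : V d) : Set (Set (Sym2 (V d))) :=
  {G | (∀ e : Fin d → Bool, ∃ v ∈ offsetBox x e L0,
          (3 / 4 : ℝ) * mv * (L0 : ℝ) ^ d ≤ (Nat.card ↥(comp G (offsetBox x e L0) v) : ℝ)) ∧
    ∀ (e e' : Fin d → Bool) (v w : V d), v ∈ offsetBox x e L0 → w ∈ offsetBox x e' L0 →
      (3 / 4 : ℝ) * mv * (L0 : ℝ) ^ d ≤ (Nat.card ↥(comp G (offsetBox x e L0) v) : ℝ) →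
      (3 / 4 : ℝ) * mv * (L0 : ℝ) ^ d ≤ (Nat.card ↥(comp G (offsetBox x e' L0) w) : ℝ) →
      EConnOn G (box x (2 * L0)) v w}

/-- The good decreasing seed event `F_x^u` (with `mv = m(u)`): every sub-box contains at
most `(5/4) m(u) L₀^d` non-isolated vertices. -/
def eventF (d L0 : ℕ) (mv : ℝ) (x : V d) : Set (Set (Sym2 (V d))) :=
  {G | ∀ e : Fin d → Bool,
    (Nat.card ↥{y | y ∈ offsetBox x e L0 ∧
        ∃ z ∈ offsetBox x e L0, adj y z ∧ s(y, z) ∈ G} : ℝ) ≤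
      (5 / 4 : ℝ) * mv * (L0 : ℝ) ^ d}

/-- The bad decreasing seed event `D̄_x`: some edge with both endpoints in
`x + [0, 2 L₀)^d` is absent from the configuration. -/
def eventDbar (d L0 : ℕ) (x : V d) : Set (Set (Sym2 (V d))) :=
  {G | ∃ y z : V d, y ∈ box x (2 * L0) ∧ z ∈ box x (2 * L0) ∧ adj y z ∧ s(y, z) ∉ G}

/-- A vertex `x ∈ G₀` is good for the pair of configurations (interlacement graph `GI`,
Bernoulli bond configuration `GB`): `E_x^u(GI)`, `F_x^u(GI)` hold and `D̄_x(GB)` fails. -/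
def goodVert (d L0 : ℕ) (mv : ℝ) (GI GB : Set (Sym2 (V d))) (x : V d) : Prop :=
  GI ∈ eventE d L0 mv x ∧ GI ∈ eventF d L0 mv x ∧ GB ∉ eventDbar d L0 x

/-!
A cascading event at level `n` splits into two cascading events at level `n - 1` based at points
that are too far apart for their boxes of side `2 L_{n-1}` to meet. Hence it forces `2 ^ n` distinct
closed edges, and these can be chosen in at most `K ^ (2 ^ n - 1) * M ^ (2 ^ n)` ways, where
`K = l₀ ^ (2 d)` bounds the choices of a pair at one step and `M` the choices of a closed edge in a
seed box. The union bound gives a probability of at most `(K M (1 - p)) ^ (2 ^ n)`, and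
`K M (1 - p) ≤ 1 / 2` once `p` is close to `1`.
-/

section Lattice

variable {d : ℕ}

lemma ld_pos (d : ℕ) : 0 < ld d := by
  unfold ld
  positivity

lemma Ln_succ (l0 L0 n : ℕ) : Ln l0 L0 (n + 1) = l0 * Ln l0 L0 n := by
  simp only [Ln, pow_succ]
  ring

lemma box_subset_box {x y : V d} {L M N : ℕ} (hy : y ∈ box x M) (h : M + L ≤ N) :
    box y L ⊆ box x N := by
  intro v hv i
  have := hy i
  have := hv i
  omega

lemma disjoint_box_of_lt_normInf {x y : V d} {L : ℕ} (h : L < normInf (x - y)) :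
    Disjoint (box x L) (box y L) := by
  refine Set.disjoint_left.2 fun v hx hy => h.not_ge (Finset.sup_le fun i _ => ?_)
  have := hx i
  have := hy i
  simp only [Pi.sub_apply]
  omega

lemma card_filter_dvd_Ico_le (L m : ℕ) (a : ℤ) :
    ((Finset.Ico a (a + (m * L : ℕ))).filter ((L : ℤ) ∣ ·)).card ≤ m := by
  rcases L.eq_zero_or_pos with rfl | hL
  · simp
  · have hL' : (0 : ℤ) < L := by exact_mod_cast hL
    have hceil : ⌈((a + (m * L : ℕ) : ℤ) : ℚ) / (L : ℤ)⌉ = ⌈(a : ℚ) / (L : ℤ)⌉ + m := by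
      rw [← Int.ceil_add_natCast]
      congr 1
      push_cast
      field_simp
    rw [← Nat.cast_le (α := ℤ), Int.Ico_filter_dvd_card _ _ hL', hceil]
    simp

lemma encard_grid_inter_box_le (L m : ℕ) (x : V d) :
    (grid L ∩ box x (m * L)).encard ≤ (m ^ d : ℕ) := by
  classical
  have hpi : grid L ∩ box x (m * L) = ↑(Fintype.piFinset fun i =>
      (Finset.Ico (x i) (x i + (m * L : ℕ))).filter ((L : ℤ) ∣ ·)) := by
    ext y
    simp only [grid, box, Set.mem_inter_iff, Set.mem_ofPred_eq, Finset.mem_coe,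
      Fintype.mem_piFinset, Finset.mem_filter, Finset.mem_Ico, forall_and]
    tauto
  rw [hpi, Set.encard_coe_eq_coe_finsetCard, Nat.cast_le, Fintype.card_piFinset]
  exact (Finset.prod_le_pow_card _ _ _ fun i _ => card_filter_dvd_Ico_le L m (x i)).trans (by simp)

lemma encard_box_le (L : ℕ) (x : V d) : (box x L).encard ≤ (L ^ d : ℕ) := by
  have hgrid : (grid 1 : Set (V d)) = Set.univ := Set.eq_univ_of_forall fun y i => by simp
  simpa [hgrid] using encard_grid_inter_box_le 1 L x

lemma encard_lam_succ_le (l0 L0 n : ℕ) (x : V d) :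
    (lam l0 L0 (n + 1) x).encard ≤ (l0 ^ d : ℕ) := by
  simpa only [lam, Ln_succ, Nat.add_sub_cancel] using
    encard_grid_inter_box_le (Ln l0 L0 n) l0 x

end Lattice

lemma encard_le_sq_of_subset_prod {α : Type*} {s : Set α} {T : Set (α × α)} {m : ℕ}
    (hs : s.encard ≤ m) (hT : T ⊆ s ×ˢ s) : T.encard ≤ (m ^ 2 : ℕ) :=
  calc T.encard ≤ s.encard * s.encard := (Set.encard_le_encard hT).trans_eq Set.encard_prod
    _ ≤ m * m := mul_le_mul' hs hs
    _ = (m ^ 2 : ℕ) := by push_cast; ring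

/-- The event `A` is witnessed by closed edges: there are at most `m` sets, each consisting of `k`
edges with endpoints in `B`, such that in every configuration of `A` all the edges of at least one
of these sets are absent. This records what the union bound needs to know about `A`. -/
def HasClosedWitnesses {d : ℕ} (A : Set (Set (Sym2 (V d)))) (B : Set (V d)) (k m : ℕ) : Prop :=
  ∃ W : Finset (Finset (Sym2 (V d))), W.card ≤ m ∧
    (∀ F ∈ W, F.card = k ∧ ∀ e ∈ F, ∀ v ∈ e, v ∈ B) ∧
    ∀ G ∈ A, ∃ F ∈ W, ∀ e ∈ F, e ∉ G

namespace HasClosedWitnesses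

variable {d : ℕ} {A A₁ A₂ : Set (Set (Sym2 (V d)))} {B B₁ B₂ : Set (V d)}
  {k k₁ k₂ m m₁ m₂ : ℕ}

lemma mono (hB : B₁ ⊆ B₂) (h : HasClosedWitnesses A B₁ k m) : HasClosedWitnesses A B₂ k m := by
  obtain ⟨W, hcard, hF, hA⟩ := h
  exact ⟨W, hcard, fun F hFW => ⟨(hF F hFW).1, fun e he v hv => hB ((hF F hFW).2 e he v hv)⟩, hA⟩

lemma setOf_notMem {e : Sym2 (V d)} (he : ∀ v ∈ e, v ∈ B) :
    HasClosedWitnesses {G | e ∉ G} B 1 1 :=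
  ⟨{{e}}, by simp, by simpa using he, fun G hG => by simpa using hG⟩

lemma inter (hB : Disjoint B₁ B₂) (h₁ : HasClosedWitnesses A₁ B₁ k₁ m₁)
    (h₂ : HasClosedWitnesses A₂ B₂ k₂ m₂) :
    HasClosedWitnesses (A₁ ∩ A₂) (B₁ ∪ B₂) (k₁ + k₂) (m₁ * m₂) := by
  classical
  obtain ⟨W₁, hcard₁, hF₁, hA₁⟩ := h₁
  obtain ⟨W₂, hcard₂, hF₂, hA₂⟩ := h₂
  refine ⟨Finset.image₂ (· ∪ ·) W₁ W₂,
    (Finset.card_image₂_le _ _ _).trans (Nat.mul_le_mul hcard₁ hcard₂), ?_, ?_⟩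
  · refine Finset.forall_mem_image₂.2 fun F₁ hFW₁ F₂ hFW₂ => ?_
    obtain ⟨hk₁, hB₁⟩ := hF₁ F₁ hFW₁
    obtain ⟨hk₂, hB₂⟩ := hF₂ F₂ hFW₂
    have hdisj : Disjoint F₁ F₂ := Finset.disjoint_left.2 fun e he₁ he₂ =>
      hB.notMem_of_mem_left (hB₁ e he₁ _ e.out_fst_mem) (hB₂ e he₂ _ e.out_fst_mem)
    refine ⟨by rw [Finset.card_union_of_disjoint hdisj, hk₁, hk₂], fun e he v hv => ?_⟩
    exact (Finset.mem_union.1 he).imp (hB₁ e · v hv) (hB₂ e · v hv)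
  · rintro G ⟨hG₁, hG₂⟩
    obtain ⟨F₁, hFW₁, hclosed₁⟩ := hA₁ G hG₁
    obtain ⟨F₂, hFW₂, hclosed₂⟩ := hA₂ G hG₂
    exact ⟨F₁ ∪ F₂, Finset.mem_image₂_of_mem hFW₁ hFW₂,
      fun e he => (Finset.mem_union.1 he).elim (hclosed₁ e) (hclosed₂ e)⟩

lemma biUnion {ι : Type*} {T : Set ι} {t : ℕ} {A : ι → Set (Set (Sym2 (V d)))}
    (hT : T.encard ≤ t) (h : ∀ i ∈ T, HasClosedWitnesses (A i) B k m) :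
    HasClosedWitnesses (⋃ i ∈ T, A i) B k (t * m) := by
  classical
  lift T to Finset ι using Set.finite_of_encard_le_coe hT
  rw [Set.encard_coe_eq_coe_finsetCard, Nat.cast_le] at hT
  choose! W hcard hF hA using h
  refine ⟨T.biUnion W, (Finset.card_biUnion_le_card_mul _ _ _ hcard).trans
    (Nat.mul_le_mul_right _ hT), fun F hFW => ?_, fun G hG => ?_⟩
  · obtain ⟨i, hi, hFi⟩ := Finset.mem_biUnion.1 hFW
    exact hF i hi F hFi
  · obtain ⟨i, hi, hGi⟩ := Set.mem_iUnion₂.1 hG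
    obtain ⟨F, hFi, hclosed⟩ := hA i hi G hGi
    exact ⟨F, Finset.mem_biUnion.2 ⟨i, hi, hFi⟩, hclosed⟩

end HasClosedWitnesses

section Cascade

variable {d l0 L0 : ℕ} {G0 : V d → Set (Set (Sym2 (V d)))}

/-- The pairs of points of `Λ_{x,n}` at `ℓ^∞` distance greater than `L_n / l(d)`, over which the
union in the recursive definition of the cascading events ranges. -/
def separatedPairs (l0 L0 n : ℕ) (x : V d) : Set (V d × V d) :=
  {q | q.1 ∈ lam l0 L0 n x ∧ q.2 ∈ lam l0 L0 n x ∧ Ln l0 L0 n < ld d * normInf (q.1 - q.2)}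

lemma cascade_succ (n : ℕ) (x : V d) :
    cascade d l0 L0 G0 (n + 1) x = ⋃ q ∈ separatedPairs l0 L0 (n + 1) x,
      cascade d l0 L0 G0 n q.1 ∩ cascade d l0 L0 G0 n q.2 := by
  ext G
  simp only [cascade, separatedPairs, Set.mem_ofPred_eq, Set.mem_iUnion, Set.mem_inter_iff,
    Prod.exists, exists_prop, exists_and_left, and_assoc]

lemma encard_separatedPairs_succ_le (n : ℕ) (x : V d) :
    (separatedPairs l0 L0 (n + 1) x).encard ≤ ((l0 ^ d) ^ 2 : ℕ) :=
  encard_le_sq_of_subset_prod (encard_lam_succ_le l0 L0 n x) fun _ hq => ⟨hq.1, hq.2.1⟩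

lemma disjoint_box_of_mem_separatedPairs (hl0 : 2 * ld d ≤ l0) {n : ℕ} {x : V d} {q : V d × V d}
    (hq : q ∈ separatedPairs l0 L0 (n + 1) x) :
    Disjoint (box q.1 (2 * Ln l0 L0 n)) (box q.2 (2 * Ln l0 L0 n)) := by
  refine disjoint_box_of_lt_normInf (Nat.lt_of_mul_lt_mul_left (a := ld d) ?_)
  calc ld d * (2 * Ln l0 L0 n) = 2 * ld d * Ln l0 L0 n := by ring
    _ ≤ l0 * Ln l0 L0 n := Nat.mul_le_mul_right _ hl0
    _ = Ln l0 L0 (n + 1) := (Ln_succ l0 L0 n).symm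
    _ < ld d * normInf (q.1 - q.2) := hq.2.2

lemma box_subset_box_of_mem_lam (hl0 : 2 ≤ l0) {n : ℕ} {x y : V d}
    (hy : y ∈ lam l0 L0 (n + 1) x) :
    box y (2 * Ln l0 L0 n) ⊆ box x (2 * Ln l0 L0 (n + 1)) := by
  refine box_subset_box hy.2 ?_
  have : 2 * Ln l0 L0 n ≤ Ln l0 L0 (n + 1) := Ln_succ l0 L0 n ▸ Nat.mul_le_mul_right _ hl0
  omega

lemma hasClosedWitnesses_cascade {k M : ℕ} (hl0 : 2 * ld d ≤ l0)
    (hG0 : ∀ x, HasClosedWitnesses (G0 x) (box x (2 * L0)) k M) (n : ℕ) (x : V d) :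
    HasClosedWitnesses (cascade d l0 L0 G0 n x) (box x (2 * Ln l0 L0 n)) (2 ^ n * k)
      (((l0 ^ d) ^ 2) ^ (2 ^ n - 1) * M ^ 2 ^ n) := by
  induction n generalizing x with
  | zero => simpa [cascade, Ln] using hG0 x
  | succ n ih =>
    have hl0' : 2 ≤ l0 := by have := ld_pos d; omega
    have hpair : ∀ q ∈ separatedPairs l0 L0 (n + 1) x, HasClosedWitnesses
        (cascade d l0 L0 G0 n q.1 ∩ cascade d l0 L0 G0 n q.2) (box x (2 * Ln l0 L0 (n + 1))) _ _ :=
      fun q hq => ((ih q.1).inter (disjoint_box_of_mem_separatedPairs hl0 hq) (ih q.2)).mono <|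
        Set.union_subset (box_subset_box_of_mem_lam hl0' hq.1)
          (box_subset_box_of_mem_lam hl0' hq.2.1)
    have hexp : 2 ^ (n + 1) - 1 = 2 * (2 ^ n - 1) + 1 := by
      have := Nat.one_le_two_pow (n := n)
      omega
    rw [cascade_succ]
    convert HasClosedWitnesses.biUnion (encard_separatedPairs_succ_le n x) hpair using 1
    · ring
    · rw [hexp]
      ring

lemma hasClosedWitnesses_eventDbar (L0 : ℕ) (x : V d) :
    HasClosedWitnesses (eventDbar d L0 x) (box x (2 * L0)) 1 (((2 * L0) ^ d) ^ 2) := by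
  have heq : eventDbar d L0 x = ⋃ q ∈ {q : V d × V d |
      q.1 ∈ box x (2 * L0) ∧ q.2 ∈ box x (2 * L0) ∧ adj q.1 q.2}, {G | s(q.1, q.2) ∉ G} := by
    ext G
    simp only [eventDbar, Set.mem_ofPred_eq, Set.mem_iUnion, Prod.exists, exists_prop, and_assoc]
  rw [heq, ← mul_one (((2 * L0) ^ d) ^ 2)]
  refine .biUnion (encard_le_sq_of_subset_prod (encard_box_le _ x) fun _ hq => ⟨hq.1, hq.2.1⟩)
    fun q hq => .setOf_notMem fun v hv => ?_
  rcases Sym2.mem_iff.1 hv with rfl | rfl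
  exacts [hq.1, hq.2.1]

end Cascade

section Probability

variable {p : ℝ}

lemma IsBernoulliProduct.measure_forall_eq_false {E : Type*} {μ : Measure (E → Bool)}
    (hμ : IsBernoulliProduct p μ) (F : Finset E) :
    μ {η | ∀ e ∈ F, η e = false} = ENNReal.ofReal (1 - p) ^ F.card := by
  simpa using hμ.2 F fun _ => false

lemma HasClosedWitnesses.measure_le {d k m : ℕ} {A : Set (Set (Sym2 (V d)))} {B : Set (V d)}
    {μ : Measure (Sym2 (V d) → Bool)} (hA : HasClosedWitnesses A B k m)
    (hμ : IsBernoulliProduct p μ) :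
    μ {η | {e | η e = true} ∈ A} ≤ m * ENNReal.ofReal (1 - p) ^ k := by
  obtain ⟨W, hcard, hF, hclosed⟩ := hA
  calc μ {η | {e | η e = true} ∈ A}
      ≤ μ (⋃ F ∈ W, {η | ∀ e ∈ F, η e = false}) := by
        refine measure_mono fun η hη => ?_
        obtain ⟨F, hFW, hη⟩ := hclosed _ hη
        exact Set.mem_biUnion hFW fun e he => by simpa using hη e he
    _ ≤ ∑ F ∈ W, μ {η | ∀ e ∈ F, η e = false} := measure_biUnion_finset_le _ _
    _ = ∑ _ ∈ W, ENNReal.ofReal (1 - p) ^ k :=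
        Finset.sum_congr rfl fun F hFW => by rw [hμ.measure_forall_eq_false, (hF F hFW).1]
    _ = W.card * ENNReal.ofReal (1 - p) ^ k := by rw [Finset.sum_const, nsmul_eq_mul]
    _ ≤ m * ENNReal.ofReal (1 - p) ^ k := by gcongr

lemma measure_cascade_le {d l0 L0 k M : ℕ} {G0 : V d → Set (Set (Sym2 (V d)))}
    {μ : Measure (Sym2 (V d) → Bool)} (hl0 : 2 * ld d ≤ l0)
    (hG0 : ∀ x, HasClosedWitnesses (G0 x) (box x (2 * L0)) k M)
    (hμ : IsBernoulliProduct p μ) (n : ℕ) (x : V d) :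
    μ {η | {e | η e = true} ∈ cascade d l0 L0 G0 n x} ≤
      (((l0 ^ d) ^ 2 * M : ℕ) * ENNReal.ofReal (1 - p) ^ k) ^ 2 ^ n := by
  have hl0_pos : 0 < l0 := by have := ld_pos d; omega
  have hcount : ((l0 ^ d) ^ 2) ^ (2 ^ n - 1) * M ^ 2 ^ n ≤ ((l0 ^ d) ^ 2 * M) ^ 2 ^ n := by
    rw [mul_pow]
    exact Nat.mul_le_mul_right _ (Nat.pow_le_pow_right (by positivity) (Nat.sub_le _ _))
  calc μ {η | {e | η e = true} ∈ cascade d l0 L0 G0 n x}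
      ≤ (((l0 ^ d) ^ 2) ^ (2 ^ n - 1) * M ^ 2 ^ n : ℕ) * ENNReal.ofReal (1 - p) ^ (2 ^ n * k) :=
        (hasClosedWitnesses_cascade hl0 hG0 n x).measure_le hμ
    _ ≤ (((l0 ^ d) ^ 2 * M) ^ 2 ^ n : ℕ) * ENNReal.ofReal (1 - p) ^ (2 ^ n * k) :=
        mul_le_mul_left (Nat.cast_le.2 hcount) _
    _ = (((l0 ^ d) ^ 2 * M : ℕ) * ENNReal.ofReal (1 - p) ^ k) ^ 2 ^ n := by
        rw [Nat.cast_pow, pow_mul', mul_pow]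

lemma exists_lt_one_natCast_mul_ofReal_one_sub_le_half (N : ℕ) :
    ∃ p : ℝ, 0 < p ∧ p < 1 ∧ ∀ p' ≥ p, (N : ℝ≥0∞) * ENNReal.ofReal (1 - p') ≤ 1 / 2 := by
  obtain ⟨ε, hε0, hε1, hNε⟩ : ∃ ε : ℝ, 0 < ε ∧ ε < 1 ∧ N * ε ≤ 1 / 2 := by
    refine ⟨1 / (2 * (N + 1)), by positivity, ?_, ?_⟩
    · rw [div_lt_one (by positivity)]
      linarith
    · rw [mul_one_div, div_le_div_iff₀ (by positivity) two_pos]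
      linarith
  refine ⟨1 - ε, by linarith, by linarith, fun p' hp' => ?_⟩
  have hhalf : (N : ℝ) * (1 - p') ≤ 1 / 2 :=
    (mul_le_mul_of_nonneg_left (by linarith) N.cast_nonneg).trans hNε
  calc (N : ℝ≥0∞) * ENNReal.ofReal (1 - p') = ENNReal.ofReal (N * (1 - p')) := by
        rw [ENNReal.ofReal_mul N.cast_nonneg, ENNReal.ofReal_natCast]
    _ ≤ ENNReal.ofReal (1 / 2) := ENNReal.ofReal_le_ofReal hhalf
    _ = 1 / 2 := by rw [ENNReal.ofReal_div_of_pos two_pos]; simp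

end Probability

theorem cascade_eventDbar_decay_general (d L0 l0 : ℕ) (hl0 : 2 * ld d ≤ l0) :
    ∃ p : ℝ, 0 < p ∧ p < 1 ∧
      ∀ p' ≥ p, ∀ μ : Measure (Sym2 (V d) → Bool), IsBernoulliProduct p' μ →
        ∀ (n : ℕ) (x : V d),
          μ {η | {e | η e = true} ∈ cascade d l0 L0 (eventDbar d L0) n x} ≤
            (1 / 2 : ℝ≥0∞) ^ 2 ^ n := by
  obtain ⟨p, hp0, hp1, hp⟩ :=
    exists_lt_one_natCast_mul_ofReal_one_sub_le_half ((l0 ^ d) ^ 2 * ((2 * L0) ^ d) ^ 2)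
  refine ⟨p, hp0, hp1, fun p' hp' μ hμ n x => ?_⟩
  refine (measure_cascade_le hl0 (hasClosedWitnesses_eventDbar L0) hμ n x).trans ?_
  exact pow_le_pow_left' (by simpa only [pow_one] using hp p' hp') _

/-- **Lemma (decay of the cascading Bernoulli bad events `D̄_{0,n}`).** For any integers
`L₀ ≥ 1` and `l₀ > 2 l(d)` there is `p < 1` such that
`P[D̄_{0,n}(B̃^p)] ≤ 2^{-2^n}` for all `n ≥ 0`. -/
theorem cascade_eventDbar_decay (d : ℕ) (hd : 2 ≤ d) (L0 l0 : ℕ)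
    (hL0 : 1 ≤ L0) (hl0 : 2 * ld d < l0) :
    ∃ p : ℝ, 0 < p ∧ p < 1 ∧
      ∀ μ : Measure (Sym2 (V d) → Bool), IsBernoulliProduct p μ →
        ∀ n : ℕ,
          μ {η | {e | η e = true} ∈ cascade d l0 L0 (eventDbar d L0) n 0} ≤
            (1 / 2 : ℝ≥0∞) ^ 2 ^ n := by
  obtain ⟨p, hp0, hp1, hp⟩ := cascade_eventDbar_decay_general d L0 l0 hl0.le
  exact ⟨p, hp0, hp1, fun μ hμ n => hp p le_rfl μ hμ n 0⟩

end RIQ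
end

section
/- Let x and y be nearest-neighbors in G_0 = L_0 Z^d (i.e., |x−y|_1 = L_0), and assume both are good. Then (a) each of the graphs (Ĩ^u ∩ B̃^p) ∩ (z + [0,L_0)^d), z ∈ {x,y}, contains a unique connected component C_z with at least (3/4)·m(u)·L_0^d vertices, and (b) C_x and C_y are connected within the graph (Ĩ^u ∩ B̃^p) ∩ ((x+[0,2L_0)^d) ∪ (y+[0,2L_0)^d)). In particular, if there is an infinite nearest-neighbor path π = (x_1, x_2, …) of good vertices in G_0, then the set ∪_{i≥1} (x_i + [0,2L_0)^d) contains an infinite nearest-neighbor path of Ĩ^u ∩ B̃^p. -/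
open MeasureTheory
open scoped ENNReal

namespace RIQ

/-!
On the doubled block of a good vertex every Bernoulli edge is present, so the seed events `E` and
`F` hold there for `GI ∩ GB` as well. Two distinct large components of a block would together
contain at least `(3/2) m L^d > (5/4) m L^d` non-isolated vertices, against `F`; this needs large
components not to be singletons, which `E` and `F` enforce as soon as the block has two vertices.
Of two neighbouring blocks, one is a sub-box of the doubled block of the other, where `E` connects
the large components. Along an infinite path of good vertices the large components therefore lie in
one infinite cluster, which contains an infinite self-avoiding path by Kőnig's lemma.
-/

section Graph

variable {W : Type*} {G : SimpleGraph W}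

/-- The order on the vertices of a connected graph with root `r` in which `x ≤ y` means that `x`
lies on a geodesic from `r` to `y`. Its covering relations are edges, so that Kőnig's lemma for
partial orders produces infinite paths. -/
@[reducible] def geodesicOrder (hG : G.Connected) (r : W) : PartialOrder W where
  le x y := G.dist r x + G.dist x y = G.dist r y
  le_refl x := by simp
  le_trans x y z hxy hyz := by
    have hrz : G.dist r z ≤ G.dist r x + G.dist x z := hG.dist_triangle
    have hxz : G.dist x z ≤ G.dist x y + G.dist y z := hG.dist_triangle
    omega
  le_antisymm x y hxy hyx := hG.dist_eq_zero_iff.1 (by omega)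

lemma dist_strictMono_geodesicOrder (hG : G.Connected) (r : W) :
    letI := geodesicOrder hG r
    StrictMono (G.dist r) := by
  let := geodesicOrder hG r
  intro x y hxy
  have hpos : 0 < G.dist x y := hG.pos_dist_of_ne hxy.ne
  have hle : G.dist r x + G.dist x y = G.dist r y := hxy.le
  omega

lemma adj_of_covBy_geodesicOrder (hG : G.Connected) (r : W) {x y : W} :
    letI := geodesicOrder hG r
    x ⋖ y → G.Adj x y := by
  let := geodesicOrder hG r
  intro hxy
  have hdist : G.dist r x + G.dist x y = G.dist r y := hxy.le
  obtain ⟨p, hp⟩ := hG.exists_walk_length_eq_dist x y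
  cases p with
  | nil => exact absurd rfl hxy.ne
  | @cons _ a _ hxa p =>
    rw [SimpleGraph.Walk.length_cons] at hp
    have hxa_dist : G.dist x a = 1 := SimpleGraph.dist_eq_one_iff_adj.2 hxa
    have hay_le : G.dist a y ≤ p.length := SimpleGraph.dist_le p
    have hra_le : G.dist r a ≤ G.dist r x + G.dist x a := hG.dist_triangle
    have hry_le : G.dist r y ≤ G.dist r a + G.dist a y := hG.dist_triangle
    have hxa_le : x ≤ a := show G.dist r x + G.dist x a = G.dist r a by omega
    have hay : a ≤ y := show G.dist r a + G.dist a y = G.dist r y by omega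
    have hay_eq : a = y := (hxy.eq_or_eq hxa_le hay).resolve_left hxa.ne'
    exact hay_eq ▸ hxa

lemma exists_injective_ray_of_connected [Infinite W] (hG : G.Connected)
    (hfin : ∀ x, (G.neighborSet x).Finite) :
    ∃ q : ℕ → W, Function.Injective q ∧ ∀ n, G.Adj (q n) (q (n + 1)) := by
  obtain ⟨r⟩ := hG.nonempty
  let := geodesicOrder hG r
  have : WellFoundedLT W := (dist_strictMono_geodesicOrder hG r).wellFoundedLT
  have hroot : Set.Ici r = Set.univ :=
    Set.eq_univ_of_forall fun x => show G.dist r r + G.dist r x = G.dist r x by simp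
  obtain ⟨q, -, hq⟩ := exists_orderEmbedding_covby_of_forall_covby_finite (b := r)
    (fun x => (hfin x).subset fun _ => adj_of_covBy_geodesicOrder hG r)
    (hroot ▸ Set.infinite_univ)
  exact ⟨q, q.injective, fun n => adj_of_covBy_geodesicOrder hG r (hq n)⟩

lemma exists_injective_ray_of_infinite_supp (hfin : ∀ x, (G.neighborSet x).Finite)
    {C : G.ConnectedComponent} (hC : C.supp.Infinite) :
    ∃ q : ℕ → W, Function.Injective q ∧ ∀ n, G.Adj (q n) (q (n + 1)) := by
  have : Infinite C := hC.to_subtype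
  obtain ⟨q, hq, hadj⟩ := exists_injective_ray_of_connected C.connected_toSimpleGraph
    fun x => (hfin x).preimage Subtype.val_injective.injOn
  exact ⟨fun n => q n, Subtype.val_injective.comp hq, hadj⟩

lemma supp_subset_support_of_one_lt_ncard {C : G.ConnectedComponent} (hC : 1 < C.supp.ncard) :
    C.supp ⊆ G.support := by
  intro x hx
  obtain ⟨y, hy, hyx⟩ := Set.exists_ne_of_one_lt_ncard hC x
  exact SimpleGraph.mem_support_of_reachable hyx.symm
    (SimpleGraph.ConnectedComponent.exact (hx.trans hy.symm))

lemma ncard_supp_add_ncard_supp_le (hfin : G.support.Finite) {C D : G.ConnectedComponent}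
    (hCD : C ≠ D) (hC : 1 < C.supp.ncard) (hD : 1 < D.supp.ncard) :
    C.supp.ncard + D.supp.ncard ≤ G.support.ncard := by
  have hCs := supp_subset_support_of_one_lt_ncard hC
  have hDs := supp_subset_support_of_one_lt_ncard hD
  rw [← Set.ncard_union_eq (G.pairwise_disjoint_supp_connectedComponent hCD)
    (hfin.subset hCs) (hfin.subset hDs)]
  exact Set.ncard_le_ncard (Set.union_subset hCs hDs) hfin

lemma two_le_ncard_support_of_adj (hfin : G.support.Finite) {x y : W} (h : G.Adj x y) :
    2 ≤ G.support.ncard := by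
  rw [← Set.ncard_pair h.ne]
  exact Set.ncard_le_ncard
    (Set.pair_subset h.mem_support_left h.mem_support_right) hfin

end Graph

section Lattice

variable {d L : ℕ} {E : Set (Sym2 (V d))} {B B' : Set (V d)} {x y z : V d}

lemma adj_comm : adj x y ↔ adj y x := by
  simp only [adj, ← Int.natAbs_neg (x _ - y _), neg_sub]

lemma natAbs_sub_le_one_of_adj (h : adj x y) (i : Fin d) : (x i - y i).natAbs ≤ 1 :=
  h ▸ Finset.single_le_sum_of_canonicallyOrdered (f := fun i => (x i - y i).natAbs)
    (Finset.mem_univ i)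

lemma finite_setOf_adj (x : V d) : {y | adj x y}.Finite := by
  refine (Set.finite_Icc (x - 1) (x + 1)).subset fun y hy => ⟨fun i => ?_, fun i => ?_⟩ <;>
  · have := natAbs_sub_le_one_of_adj hy i
    simp only [Pi.sub_apply, Pi.add_apply, Pi.one_apply]
    omega

/-- The nearest-neighbour graph `E ∩ B` whose edges are the lattice edges in `E` with both
endpoints in `B`. It is a graph on all of `ℤ^d`, so the vertices outside `B` are isolated. -/
def graphOn (E : Set (Sym2 (V d))) (B : Set (V d)) : SimpleGraph (V d) where
  Adj x y := adj x y ∧ s(x, y) ∈ E ∧ x ∈ B ∧ y ∈ B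
  symm := ⟨fun _ _ h => ⟨adj_comm.1 h.1, Sym2.eq_swap ▸ h.2.1, h.2.2.2, h.2.2.1⟩⟩
  loopless := ⟨fun x h => by simpa [adj] using h.1⟩

lemma graphOn_mono (h : B ⊆ B') : graphOn E B ≤ graphOn E B' :=
  fun _ _ hab => ⟨hab.1, hab.2.1, h hab.2.2.1, h hab.2.2.2⟩

lemma finite_neighborSet_graphOn (E : Set (Sym2 (V d))) (B : Set (V d)) (x : V d) :
    ((graphOn E B).neighborSet x).Finite :=
  (finite_setOf_adj x).subset fun _ h => h.1

lemma support_graphOn :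
    (graphOn E B).support = {y | y ∈ B ∧ ∃ z ∈ B, adj y z ∧ s(y, z) ∈ E} := by
  ext y
  exact ⟨fun ⟨z, hadj, hE, hy, hz⟩ => ⟨hy, z, hz, hadj, hE⟩,
    fun ⟨hy, z, hz, hadj, hE⟩ => ⟨z, hadj, hE, hy, hz⟩⟩

lemma graphOn_adj_iff :
    (graphOn E B).Adj x y ↔ adj x y ∧ s(x, y) ∈ edgesIn E B := by
  simp [graphOn, edgesIn]

lemma eConnOn_iff_reachable : EConnOn E B x y ↔ (graphOn E B).Reachable x y := by
  simp only [EConnOn, EConn, ← graphOn_adj_iff]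
  constructor
  · rintro ⟨n, p, rfl, rfl, h⟩
    induction n with
    | zero => exact .refl _
    | succ n ih => exact (ih fun i hi => h i (by omega)).trans (h n n.lt_succ_self).reachable
  · rintro ⟨p⟩
    exact ⟨p.length, p.getVert, p.getVert_zero, p.getVert_length, fun i hi => p.adj_getVert_succ hi⟩

lemma comp_eq_supp (E : Set (Sym2 (V d))) (B : Set (V d)) (x : V d) :
    comp E B x = ((graphOn E B).connectedComponentMk x).supp := by
  ext y
  rw [SimpleGraph.ConnectedComponent.mem_supp_iff, SimpleGraph.ConnectedComponent.eq,
    SimpleGraph.reachable_comm]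
  exact eConnOn_iff_reachable

lemma finite_box (x : V d) (L : ℕ) : (box x L).Finite :=
  (Set.finite_Icc x (fun i => x i + L)).subset
    fun _ hy => ⟨fun i => (hy i).1, fun i => (hy i).2.le⟩

lemma finite_support_graphOn_box (E : Set (Sym2 (V d))) (x : V d) (L : ℕ) :
    (graphOn E (box x L)).support.Finite :=
  (finite_box x L).subset (support_graphOn ▸ fun _ h => h.1)

lemma comp_subset (hx : x ∈ B) : comp E B x ⊆ B := by
  intro y hy
  obtain rfl | hne := eq_or_ne y x
  · exact hx
  · have := SimpleGraph.mem_support_of_reachable hne (eConnOn_iff_reachable.1 hy).symm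
    exact (support_graphOn ▸ this).1

lemma one_le_card_comp (hx : x ∈ box z L) : 1 ≤ Nat.card (comp E (box z L) x) := by
  have : Finite (comp E (box z L) x) := (finite_box z L).subset (comp_subset hx)
  have : Nonempty (comp E (box z L) x) := ⟨x, eConnOn_iff_reachable.2 (.refl _)⟩
  exact Nat.card_pos

lemma mem_box_of_adj_corner (hL : 2 ≤ L) {M : ℕ} (h : adj z x) (hx : x ∈ box z M) :
    x ∈ box z L := by
  intro i
  have hi := natAbs_sub_le_one_of_adj h i
  have hzi := (hx i).1
  omega

lemma offsetBox_false (x : V d) (L : ℕ) : offsetBox x (fun _ => false) L = box x L := by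
  simp [offsetBox]

lemma offsetBox_subset_box (x : V d) (e : Fin d → Bool) (L : ℕ) :
    offsetBox x e L ⊆ box x (2 * L) := by
  intro y hy i
  have hi := hy i
  dsimp only at hi
  split_ifs at hi <;> omega

lemma exists_box_eq_offsetBox (h : ∀ i, y i = x i ∨ y i = x i + L) :
    ∃ e, box y L = offsetBox x e L := by
  refine ⟨fun i => decide (y i = x i + L), congrArg (box · L) (funext fun i => ?_)⟩
  rcases h i with hi | hi <;> simp [hi]

section Grid

variable (hx : x ∈ grid (d := d) L) (hy : y ∈ grid (d := d) L)
include hx hy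

lemma grid_eq_of_mem_box (hzx : z ∈ box x L) (hzy : z ∈ box y L) : x = y := by
  funext i
  have hxi := hzx i
  have hyi := hzy i
  have : x i - y i = 0 :=
    Int.eq_zero_of_abs_lt_dvd (dvd_sub (hx i) (hy i)) (abs_lt.2 ⟨by omega, by omega⟩)
  omega

lemma natAbs_sub_eq_zero_or_eq_of_grid (hxy : (∑ i, (x i - y i).natAbs) = L) (i : Fin d) :
    (x i - y i).natAbs = 0 ∨ (x i - y i).natAbs = L := by
  have hle : (x i - y i).natAbs ≤ L :=
    hxy ▸ Finset.single_le_sum_of_canonicallyOrdered (f := fun i => (x i - y i).natAbs)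
      (Finset.mem_univ i)
  have hdvd : L ∣ (x i - y i).natAbs := Int.natCast_dvd.1 (dvd_sub (hx i) (hy i))
  exact (Nat.eq_zero_or_pos _).imp_right fun hpos => hle.antisymm (Nat.le_of_dvd hpos hdvd)

lemma box_eq_offsetBox_of_grid_neighbor (hxy : (∑ i, (x i - y i).natAbs) = L) :
    (∃ e, box y L = offsetBox x e L) ∨ ∃ e, box x L = offsetBox y e L := by
  by_cases hdown : ∃ i, x i = y i + L
  · obtain ⟨i, hi⟩ := hdown
    refine .inr (exists_box_eq_offsetBox fun j => ?_)
    obtain rfl | hji := eq_or_ne j i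
    · exact .inr hi
    · have hpair : (x i - y i).natAbs + (x j - y j).natAbs ≤ L :=
        hxy ▸ Finset.add_le_sum (f := fun k => (x k - y k).natAbs) (fun _ _ => Nat.zero_le _)
          (Finset.mem_univ i) (Finset.mem_univ j) hji.symm
      omega
  · push Not at hdown
    refine .inl (exists_box_eq_offsetBox fun i => ?_)
    have hne := hdown i
    have hval := natAbs_sub_eq_zero_or_eq_of_grid hx hy hxy i
    omega

end Grid

end Lattice

section SeedEvents

variable {d L : ℕ} {m : ℝ} {G GI GB : Set (Sym2 (V d))} {x y z v w : V d}

/-- The vertices of `B` whose connected component in `G ∩ B` is large, that is, has at least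
`(3/4) m L^d` vertices; `m` is the density and `L` the side length of the box `B`. -/
def largeVertices (L : ℕ) (m : ℝ) (G : Set (Sym2 (V d))) (B : Set (V d)) : Set (V d) :=
  {v | v ∈ B ∧ (3 / 4 : ℝ) * m * (L : ℝ) ^ d ≤ (Nat.card (comp G B v) : ℝ)}

lemma largeVertices_nonempty (hE : G ∈ eventE d L m z) :
    (largeVertices L m G (box z L)).Nonempty :=
  offsetBox_false z L ▸ hE.1 fun _ => false

lemma reachable_of_mem_largeVertices_offsetBox (hE : G ∈ eventE d L m z) {e : Fin d → Bool}
    (hv : v ∈ largeVertices L m G (box z L)) (hw : w ∈ largeVertices L m G (offsetBox z e L)) :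
    (graphOn G (box z (2 * L))).Reachable v w := by
  rw [← offsetBox_false z L] at hv
  exact eConnOn_iff_reachable.1 (hE.2 _ e v w hv.1 hw.1 hv.2 hw.2)

lemma reachable_of_mem_largeVertices_box (hE : G ∈ eventE d L m z)
    (hv : v ∈ largeVertices L m G (box z L)) (hw : w ∈ largeVertices L m G (box z L)) :
    (graphOn G (box z (2 * L))).Reachable v w :=
  reachable_of_mem_largeVertices_offsetBox hE hv (e := fun _ => false)
    ((offsetBox_false z L).symm ▸ hw)

lemma ncard_support_graphOn_box_le (hF : G ∈ eventF d L m z) :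
    ((graphOn G (box z L)).support.ncard : ℝ) ≤ 5 / 4 * m * (L : ℝ) ^ d := by
  rw [support_graphOn, ← offsetBox_false z L]
  exact hF fun _ => false

lemma one_lt_large_threshold_of_nontrivial_box (hbox : (box z L).Nontrivial)
    (hE : G ∈ eventE d L m z) (hF : G ∈ eventF d L m z) : 1 < (3 / 4 : ℝ) * m * (L : ℝ) ^ d := by
  by_contra! hle
  -- Otherwise every vertex is large, so `E` gives the corner `z` a neighbour, and `F` fails.
  have hlarge : ∀ v ∈ box z L, v ∈ largeVertices L m G (box z L) := fun v hv =>
    ⟨hv, hle.trans (by exact_mod_cast one_le_card_comp hv)⟩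
  obtain ⟨w, hw, hwz⟩ := hbox.exists_ne z
  obtain ⟨i, hi⟩ := Function.ne_iff.1 hwz
  have hL : 2 ≤ L := by
    have := hw i
    omega
  have hz : z ∈ box z L := fun i => ⟨le_rfl, by omega⟩
  obtain ⟨a, hadj, hG, -, ha⟩ := SimpleGraph.mem_support_of_reachable hwz.symm
    (reachable_of_mem_largeVertices_box hE (hlarge z hz) (hlarge w hw))
  have hza : (graphOn G (box z L)).Adj z a := ⟨hadj, hG, hz, mem_box_of_adj_corner hL hadj ha⟩
  have htwo : (2 : ℝ) ≤ (graphOn G (box z L)).support.ncard := by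
    exact_mod_cast two_le_ncard_support_of_adj (finite_support_graphOn_box G z L) hza
  linarith [ncard_support_graphOn_box_le hF]

lemma comp_eq_comp_of_mem_largeVertices (hE : G ∈ eventE d L m z) (hF : G ∈ eventF d L m z)
    (hv : v ∈ largeVertices L m G (box z L)) (hw : w ∈ largeVertices L m G (box z L)) :
    comp G (box z L) v = comp G (box z L) w := by
  by_contra hne
  have hthreshold : 1 < (3 / 4 : ℝ) * m * (L : ℝ) ^ d :=
    one_lt_large_threshold_of_nontrivial_box ⟨v, hv.1, w, hw.1, fun h => hne (h ▸ rfl)⟩ hE hF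
  obtain ⟨-, hv⟩ := hv
  obtain ⟨-, hw⟩ := hw
  rw [Nat.card_coe_set_eq, comp_eq_supp] at hv hw
  rw [comp_eq_supp, comp_eq_supp, SimpleGraph.ConnectedComponent.supp_inj] at hne
  have hsum := ncard_supp_add_ncard_supp_le (finite_support_graphOn_box G z L) hne
    (by exact_mod_cast hthreshold.trans_le hv) (by exact_mod_cast hthreshold.trans_le hw)
  rw [← Nat.cast_le (α := ℝ), Nat.cast_add] at hsum
  linarith [ncard_support_graphOn_box_le hF]

lemma existsUnique_large_comp (hE : G ∈ eventE d L m z) (hF : G ∈ eventF d L m z) :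
    ∃! C : Set (V d), (∃ v ∈ box z L, C = comp G (box z L) v) ∧
      (3 / 4 : ℝ) * m * (L : ℝ) ^ d ≤ (Nat.card C : ℝ) := by
  obtain ⟨v, hv⟩ := largeVertices_nonempty hE
  refine ⟨comp G (box z L) v, ⟨⟨v, hv.1, rfl⟩, hv.2⟩, ?_⟩
  rintro _ ⟨⟨w, hw, rfl⟩, hw_card⟩
  exact comp_eq_comp_of_mem_largeVertices hE hF ⟨hw, hw_card⟩ hv

lemma reachable_of_grid_neighbor (hx : x ∈ grid (d := d) L) (hy : y ∈ grid (d := d) L)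
    (hxy : (∑ i, (x i - y i).natAbs) = L) (hEx : G ∈ eventE d L m x) (hEy : G ∈ eventE d L m y)
    (hv : v ∈ largeVertices L m G (box x L)) (hw : w ∈ largeVertices L m G (box y L)) :
    (graphOn G (box x (2 * L) ∪ box y (2 * L))).Reachable v w := by
  rcases box_eq_offsetBox_of_grid_neighbor hx hy hxy with ⟨e, he⟩ | ⟨e, he⟩
  · exact (reachable_of_mem_largeVertices_offsetBox hEx hv (he ▸ hw)).mono
      (graphOn_mono Set.subset_union_left)
  · exact (reachable_of_mem_largeVertices_offsetBox hEy hw (he ▸ hv)).symm.mono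
      (graphOn_mono Set.subset_union_right)

lemma exists_injective_ray_of_grid_path {π : ℕ → V d} (hπ : Function.Injective π)
    (hgrid : ∀ i, π i ∈ grid (d := d) L) (hE : ∀ i, G ∈ eventE d L m (π i))
    (hstep : ∀ i, (∑ j, (π i j - π (i + 1) j).natAbs) = L) :
    ∃ q : ℕ → V d, Function.Injective q ∧
      ∀ i, (graphOn G (⋃ j, box (π j) (2 * L))).Adj (q i) (q (i + 1)) := by
  choose v hv using fun i => largeVertices_nonempty (hE i)
  have hblock : ∀ i, box (π i) (2 * L) ⊆ ⋃ j, box (π j) (2 * L) :=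
    Set.subset_iUnion fun j => box (π j) (2 * L)
  have hreach : ∀ i, (graphOn G (⋃ j, box (π j) (2 * L))).Reachable (v i) (v 0) := by
    intro i
    induction i with
    | zero => exact .refl _
    | succ i ih =>
      have hnext := reachable_of_grid_neighbor (hgrid i) (hgrid (i + 1)) (hstep i) (hE i)
        (hE (i + 1)) (hv i) (hv (i + 1))
      exact (hnext.mono
        (graphOn_mono (Set.union_subset (hblock i) (hblock (i + 1))))).symm.trans ih
  have hv_inj : Function.Injective v := fun i j hij =>
    hπ (grid_eq_of_mem_box (hgrid i) (hgrid j) (hv i).1 (hij ▸ (hv j).1))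
  exact exists_injective_ray_of_infinite_supp (finite_neighborSet_graphOn G _)
    (C := (graphOn G (⋃ j, box (π j) (2 * L))).connectedComponentMk (v 0))
    ((Set.infinite_range_of_injective hv_inj).mono (Set.range_subset_iff.2 fun i =>
      SimpleGraph.ConnectedComponent.sound (hreach i)))

lemma dependsOn_eventE (d L : ℕ) (m : ℝ) (x : V d) :
    DependsOn (eventE d L m x) (box x (2 * L)) := by
  intro G G' hGG'
  have hedges : ∀ B ⊆ box x (2 * L), edgesIn G B = edgesIn G' B := fun B hB =>
    Set.ext fun e => and_congr_left fun he => hGG' e fun v hv => hB (he v hv)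
  simp only [eventE, comp, EConnOn, Set.mem_ofPred_eq, hedges _ (offsetBox_subset_box x _ L),
    hedges _ subset_rfl]

lemma decreasingEv_eventF (d L : ℕ) (m : ℝ) (x : V d) : DecreasingEv (eventF d L m x) := by
  intro G G' hGG' hF e
  refine le_trans (Nat.cast_le.2 (Nat.card_mono ((finite_box _ L).subset fun _ h => h.1) ?_)) (hF e)
  rintro y ⟨hy, z, hz, hadj, hG⟩
  exact ⟨hy, z, hz, hadj, hGG' hG⟩

lemma goodVert.inter_mem_eventE (hGI : ∀ x y : V d, s(x, y) ∈ GI → adj x y)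
    (hx : goodVert d L m GI GB x) : GI ∩ GB ∈ eventE d L m x := by
  obtain ⟨hE, -, hD⟩ := hx
  refine (dependsOn_eventE d L m x (GI ∩ GB) GI fun e he => and_iff_left_of_imp fun heI => ?_).2 hE
  induction e with
  | h a b =>
    by_contra heB
    exact hD ⟨a, b, he a (Sym2.mem_mk_left a b), he b (Sym2.mem_mk_right a b), hGI a b heI, heB⟩

lemma goodVert.inter_mem_eventF (hx : goodVert d L m GI GB x) : GI ∩ GB ∈ eventF d L m x :=
  decreasingEv_eventF d L m x _ _ Set.inter_subset_left hx.2.1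

end SeedEvents

theorem good_blocks_connect_general (d L : ℕ) (m : ℝ) (GI GB : Set (Sym2 (V d)))
    (hGI : ∀ x y : V d, s(x, y) ∈ GI → adj x y)
    (x y : V d) (hx : x ∈ grid (d := d) L) (hy : y ∈ grid (d := d) L)
    (hxy : (∑ i, (x i - y i).natAbs) = L)
    (hgx : goodVert d L m GI GB x) (hgy : goodVert d L m GI GB y) :
    (∀ z ∈ ({x, y} : Set (V d)), ∃! Cz : Set (V d),
        (∃ v ∈ box z L, Cz = comp (GI ∩ GB) (box z L) v) ∧
        (3 / 4 : ℝ) * m * (L : ℝ) ^ d ≤ (Nat.card ↥Cz : ℝ)) ∧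
    (∀ v w : V d, v ∈ box x L → w ∈ box y L →
        (3 / 4 : ℝ) * m * (L : ℝ) ^ d ≤ (Nat.card ↥(comp (GI ∩ GB) (box x L) v) : ℝ) →
        (3 / 4 : ℝ) * m * (L : ℝ) ^ d ≤ (Nat.card ↥(comp (GI ∩ GB) (box y L) w) : ℝ) →
        EConnOn (GI ∩ GB) (box x (2 * L) ∪ box y (2 * L)) v w) ∧
    (∀ π : ℕ → V d, Function.Injective π →
        (∀ i : ℕ, π i ∈ grid (d := d) L ∧ goodVert d L m GI GB (π i)) →
        (∀ i : ℕ, (∑ j, (π i j - π (i + 1) j).natAbs) = L) →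
        ∃ q : ℕ → V d, Function.Injective q ∧
          (∀ i : ℕ, q i ∈ ⋃ j : ℕ, box (π j) (2 * L)) ∧
          ∀ i : ℕ, adj (q i) (q (i + 1)) ∧ s(q i, q (i + 1)) ∈ GI ∩ GB) := by
  have hEx := hgx.inter_mem_eventE hGI
  have hEy := hgy.inter_mem_eventE hGI
  refine ⟨?_, fun v w hv hw hv_card hw_card => ?_, fun π hπ hgood hstep => ?_⟩
  · rintro z (rfl | rfl)
    exacts [existsUnique_large_comp hEx hgx.inter_mem_eventF,
      existsUnique_large_comp hEy hgy.inter_mem_eventF]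
  · exact eConnOn_iff_reachable.2
      (reachable_of_grid_neighbor hx hy hxy hEx hEy ⟨hv, hv_card⟩ ⟨hw, hw_card⟩)
  · obtain ⟨q, hq, hadj⟩ := exists_injective_ray_of_grid_path hπ (fun i => (hgood i).1)
      (fun i => (hgood i).2.inter_mem_eventE hGI) hstep
    exact ⟨q, hq, fun i => (hadj i).2.2.1, fun i => ⟨(hadj i).1, (hadj i).2.1⟩⟩

/-- **Lemma (good neighbouring blocks are well connected).** Let `x, y` be
nearest-neighbours in `G₀ = L₀ℤ^d` (both in `L₀ℤ^d` with `|x - y|₁ = L₀`) and assume both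
are good for the configurations `(GI, GB)` (interlacement graph, Bernoulli bonds).  Then
(a) each graph `(GI ∩ GB) ∩ (z + [0,L₀)^d)`, `z ∈ {x,y}`, has a unique connected
component with at least `(3/4) m(u) L₀^d` vertices, (b) these two components are
connected within `(GI ∩ GB) ∩ ((x+[0,2L₀)^d) ∪ (y+[0,2L₀)^d))`, and consequently every
infinite nearest-neighbour path of good vertices of `G₀` yields an infinite
nearest-neighbour path of `GI ∩ GB` inside the union of the corresponding blocks. -/
theorem good_blocks_connect (d : ℕ) (hd : 3 ≤ d) (u : ℝ) (hu : 0 < u)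
    (L0 : ℕ) (hL0 : 1 ≤ L0) (GI GB : Set (Sym2 (V d)))
    (hGI : ∀ x y : V d, s(x, y) ∈ GI → adj x y)
    (x y : V d) (hx : x ∈ grid (d := d) L0) (hy : y ∈ grid (d := d) L0)
    (hxy : (∑ i, (x i - y i).natAbs) = L0)
    (hgx : goodVert d L0 (density d u) GI GB x)
    (hgy : goodVert d L0 (density d u) GI GB y) :
    (∀ z ∈ ({x, y} : Set (V d)), ∃! Cz : Set (V d),
        (∃ v ∈ box z L0, Cz = comp (GI ∩ GB) (box z L0) v) ∧
        (3 / 4 : ℝ) * density d u * (L0 : ℝ) ^ d ≤ (Nat.card ↥Cz : ℝ)) ∧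
    (∀ v w : V d, v ∈ box x L0 → w ∈ box y L0 →
        (3 / 4 : ℝ) * density d u * (L0 : ℝ) ^ d ≤
          (Nat.card ↥(comp (GI ∩ GB) (box x L0) v) : ℝ) →
        (3 / 4 : ℝ) * density d u * (L0 : ℝ) ^ d ≤
          (Nat.card ↥(comp (GI ∩ GB) (box y L0) w) : ℝ) →
        EConnOn (GI ∩ GB) (box x (2 * L0) ∪ box y (2 * L0)) v w) ∧
    (∀ π : ℕ → V d, Function.Injective π →
        (∀ i : ℕ, π i ∈ grid (d := d) L0 ∧ goodVert d L0 (density d u) GI GB (π i)) →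
        (∀ i : ℕ, (∑ j, (π i j - π (i + 1) j).natAbs) = L0) →
        ∃ q : ℕ → V d, Function.Injective q ∧
          (∀ i : ℕ, q i ∈ ⋃ j : ℕ, box (π j) (2 * L0)) ∧
          ∀ i : ℕ, adj (q i) (q (i + 1)) ∧ s(q i, q (i + 1)) ∈ GI ∩ GB) :=
  good_blocks_connect_general d L0 (density d u) GI GB hGI x y hx hy hxy hgx hgy

end RIQ
end

section
/- Let R ≥ 1 with εR ≥ 10 and k = ⌊εR/10⌋. Suppose that for every z ∈ [0,R)^d the following two conditions hold: (a) B(z,k) is connected to the boundary of B(z,4k) by a nearest-neighbor path in V^u, and (b) every two nearest-neighbor paths from B(z,2k) to the boundary of B(z,3k) in V^u lie in the same connected component of V^u ∩ B(z,6k). Then every pair of vertices x, y ∈ V^u_{εR} ∩ [0,R)^d is connected by a path in V^u ∩ [−εR, (1+ε)R)^d. -/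
open MeasureTheory
open scoped ENNReal

namespace RIQ

/-- `V^u_k` (for the set of sites `S`): the vertices of `S` lying in connected components
of `S` of `ℓ^∞`-diameter at least `k`. -/
def Vk {d : ℕ} (S : Set (V d)) (k : ℝ) : Set (V d) :=
  {x | x ∈ S ∧ ∃ a b : V d, SConn S x a ∧ SConn S x b ∧ k ≤ (normInf (a - b) : ℝ)}

/-- The box `[0, R)^d`. -/
def box0 (d R : ℕ) : Set (V d) := {x | ∀ i, 0 ≤ x i ∧ x i < (R : ℤ)}

/-- The box `[-εR, (1+ε)R)^d`. -/
def bigBox (d : ℕ) (ε : ℝ) (R : ℕ) : Set (V d) :=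
  {x | ∀ i, -(ε * (R : ℝ)) ≤ (x i : ℝ) ∧ (x i : ℝ) < (1 + ε) * (R : ℝ)}

/-!
Call a vertex of `B(z, 2k)` crossing at `z` if its component in `S` reaches distance `3k` from `z`.
Condition (a) provides, at every `z` of the region, a vertex of `B(z, k)` whose component reaches
distance `4k`; since `k ≥ 1`, such a vertex is crossing both at `z` and at every `ℓ^∞`-neighbour of
`z`. By condition (b) any two vertices crossing at the same site are connected, so following a
`*`-path in the region connects any two vertices crossing at sites of the region. A vertex whose
component has diameter at least `6k` is crossing at itself, by the triangle inequality.
-/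

variable {d : ℕ} {S T D : Set (V d)} {x y z w : V d} {m m' n n' : ℕ}

theorem normInf_le_iff : normInf x ≤ n ↔ ∀ i, (x i).natAbs ≤ n := by
  simp [normInf]

theorem coe_normInf (x : V d) : (normInf x : ℝ) = ‖x‖ := by
  simp only [normInf, Pi.norm_def, ← NNReal.natCast_natAbs, ← Nat.cast_finsetSup,
    NNReal.coe_natCast]

theorem normInf_eq_zero : normInf x = 0 ↔ x = 0 := by
  rw [← Nat.cast_eq_zero (R := ℝ), coe_normInf, norm_eq_zero]

theorem normInf_sub_comm (x y : V d) : normInf (x - y) = normInf (y - x) := by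
  have h := norm_sub_rev x y
  simp only [← coe_normInf] at h
  exact_mod_cast h

theorem normInf_sub_le (x y z : V d) :
    normInf (x - z) ≤ normInf (x - y) + normInf (y - z) := by
  have h := norm_sub_le_norm_sub_add_norm_sub x y z
  simp only [← coe_normInf] at h
  exact_mod_cast h

theorem adj.normInf_sub_le_one (h : adj x y) : normInf (x - y) ≤ 1 :=
  normInf_le_iff.2 fun i ↦ h ▸ Finset.single_le_sum (f := fun j ↦ (x j - y j).natAbs)
    (fun _ _ ↦ Nat.zero_le _) (Finset.mem_univ i)

theorem SConn.mono (hST : S ⊆ T) (h : SConn S x y) : SConn T x y := by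
  obtain ⟨n, p, h0, hn, hS, hadj⟩ := h
  exact ⟨n, p, h0, hn, fun i hi ↦ hST (hS i hi), hadj⟩

theorem SConn.trans (hxy : SConn S x y) (hyz : SConn S y z) : SConn S x z := by
  obtain ⟨n, p, hp0, hpn, hpS, hpadj⟩ := hxy
  obtain ⟨m, q, hq0, hqm, hqS, hqadj⟩ := hyz
  exact ⟨n + m, fun i ↦ if i < n then p i else q (i - n), by grind, by simp [hqm], by grind,
    by grind⟩

theorem SConn.exists_normInf_sub_eq (h : SConn S x y) (hx : normInf (x - z) ≤ n)
    (hy : n ≤ normInf (y - z)) :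
    ∃ b, normInf (b - z) = n ∧ SConn (S ∩ ballInf z n) x b := by
  classical
  obtain ⟨l, p, rfl, rfl, hS, hadj⟩ := h
  have hex : ∃ j, n ≤ normInf (p j - z) := ⟨l, hy⟩
  have hjl : Nat.find hex ≤ l := Nat.find_min' hex hy
  have hle : ∀ i ≤ Nat.find hex, normInf (p i - z) ≤ n := by
    rintro (_ | i) hi
    · exact hx
    · have hlt : normInf (p i - z) < n := not_le.1 (Nat.find_min hex hi)
      have hstep := (hadj i (by omega)).normInf_sub_le_one
      have htri := normInf_sub_le (p (i + 1)) (p i) z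
      rw [normInf_sub_comm (p (i + 1)) (p i)] at htri
      omega
  exact ⟨p (Nat.find hex), (hle _ le_rfl).antisymm (Nat.find_spec hex), Nat.find hex, p, rfl, rfl,
    fun i hi ↦ ⟨hS i (hi.trans hjl), hle i hi⟩, fun i hi ↦ hadj i (hi.trans_le hjl)⟩

/-- The crossing vertices at `z`: those of `B(z, m)` whose connected component in `S` reaches
`ℓ^∞`-distance `n` from `z`. The connecting path is not confined to a ball, which makes the notion
monotone in the radii. -/
def crossing (S : Set (V d)) (z : V d) (m n : ℕ) : Set (V d) :=
  {x | normInf (x - z) ≤ m ∧ ∃ y, SConn S x y ∧ n ≤ normInf (y - z)}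

theorem exists_normInf_sub_eq_of_mem_crossing (hmn : m ≤ n) (hx : x ∈ crossing S z m n) :
    ∃ b, normInf (b - z) = n ∧ SConn (S ∩ ballInf z n) x b := by
  obtain ⟨hxz, y, hxy, hyz⟩ := hx
  exact hxy.exists_normInf_sub_eq (hxz.trans hmn) hyz

theorem crossing_subset_crossing {r : ℕ} (hzw : normInf (z - w) ≤ r) (hm : m + r ≤ m')
    (hn : n' + r ≤ n) : crossing S z m n ⊆ crossing S w m' n' := by
  rintro x ⟨hxz, y, hxy, hyz⟩
  have hxw := normInf_sub_le x z w
  have hyw := normInf_sub_le y w z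
  rw [normInf_sub_comm w z] at hyw
  exact ⟨by omega, y, hxy, by omega⟩

theorem crossing_mono (hm : m ≤ m') (hn : n' ≤ n) : crossing S z m n ⊆ crossing S z m' n' :=
  crossing_subset_crossing (normInf_eq_zero.2 (sub_self z)).le hm hn

theorem mem_crossing_of_mem_Vk {L : ℝ} (hL : 2 * n ≤ L) (hx : x ∈ Vk S L) :
    x ∈ crossing S x 0 n := by
  obtain ⟨-, a, b, ha, hb, hab⟩ := hx
  have hfar : 2 * n ≤ normInf (a - b) := by exact_mod_cast hL.trans hab
  have htri := normInf_sub_le a x b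
  rw [normInf_sub_comm x b] at htri
  refine ⟨(normInf_eq_zero.2 (sub_self x)).le, ?_⟩
  rcases le_total n (normInf (a - x)) with h | h
  · exact ⟨a, ha, h⟩
  · exact ⟨b, hb, by omega⟩

/-- `*`-connectedness of a set of sites: any two of its points are joined within it by a path whose
steps have `ℓ^∞`-length at most one. -/
def StarConnected (D : Set (V d)) : Prop :=
  ∀ x ∈ D, ∀ y ∈ D,
    Relation.ReflTransGen (fun z w ↦ z ∈ D ∧ w ∈ D ∧ normInf (z - w) ≤ 1) x y

theorem exists_uIcc_step (h : normInf (y - z) ≤ n + 1) :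
    ∃ w, (∀ i, w i ∈ Set.uIcc (z i) (y i)) ∧ normInf (z - w) ≤ 1 ∧ normInf (y - w) ≤ n := by
  simp only [normInf_le_iff, Pi.sub_apply] at h ⊢
  -- The projection of `y` onto `B(z, 1)`.
  refine ⟨fun i ↦ max (z i - 1) (min (y i) (z i + 1)), ?_⟩
  simp only [Set.mem_uIcc, ← forall_and]
  intro i
  have hi := h i
  omega

theorem starConnected_pi {I : Fin d → Set ℤ} (hI : ∀ i, (I i).OrdConnected) :
    StarConnected (Set.univ.pi I) := by
  intro x hx y hy
  obtain ⟨n, hn⟩ : ∃ n, normInf (y - x) ≤ n := ⟨_, le_rfl⟩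
  induction n generalizing x with
  | zero => rw [sub_eq_zero.1 (normInf_eq_zero.1 (Nat.le_zero.1 hn))]
  | succ n ih =>
    obtain ⟨w, hw, hxw, hyw⟩ := exists_uIcc_step hn
    have hwI : w ∈ Set.univ.pi I := fun i hi ↦ (hI i).uIcc_subset (hx i hi) (hy i hi) (hw i)
    exact .head ⟨hx, hwI, hxw⟩ (ih w hwI hyw)

theorem starConnected_box0 (d R : ℕ) : StarConnected (box0 d R) := by
  have hbox : box0 d R = Set.univ.pi fun _ ↦ Set.Ico 0 (R : ℤ) := by ext; simp [box0]
  exact hbox ▸ starConnected_pi fun _ ↦ Set.ordConnected_Ico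

theorem SConn.of_mem_crossing (hD : StarConnected D) (hm : m < m') (hn : n' < n)
    (hne : ∀ z ∈ D, (crossing S z m n).Nonempty)
    (huniq : ∀ z ∈ D, ∀ x ∈ crossing S z m' n', ∀ y ∈ crossing S z m' n', SConn T x y)
    (hz : z ∈ D) (hw : w ∈ D) (hx : x ∈ crossing S z m' n') (hy : y ∈ crossing S w m' n') :
    SConn T x y := by
  induction hD z hz w hw generalizing y with
  | refl => exact huniq z hz x hx y hy
  | tail _ huw ih =>
    obtain ⟨hu, hw, huw⟩ := huw
    obtain ⟨v, hv⟩ := hne _ hu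
    have hvw := crossing_subset_crossing huw hm hn hv
    exact (ih hu (crossing_mono hm.le hn.le hv)).trans (huniq _ hw v hvw y hy)

theorem ballInf_subset_bigBox {R r : ℕ} {ε : ℝ} (hz : z ∈ box0 d R) (hr : (r : ℝ) ≤ ε * R) :
    ballInf z r ⊆ bigBox d ε R := by
  intro w hw i
  have hwi := normInf_le_iff.1 hw i
  have hzi := hz i
  simp only [Pi.sub_apply] at hwi
  have hlower : -(r : ℝ) ≤ w i := by exact_mod_cast (by omega : -(r : ℤ) ≤ w i)
  have hupper : (w i : ℝ) < R + r := by exact_mod_cast (by omega : w i < R + r)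
  constructor <;> linarith

theorem vacant_connectivity_deterministic_general {ρ : ℕ} {L : ℝ} (hD : StarConnected D)
    (hm : m < m') (hmn : m' ≤ n') (hn : n' < n) (hL : 2 * n' ≤ L)
    (hT : ∀ z ∈ D, ballInf z ρ ⊆ T)
    (ha : ∀ z ∈ D, ∃ a b : V d,
        normInf (a - z) ≤ m ∧ normInf (b - z) = n ∧ SConn (S ∩ ballInf z n) a b)
    (hb : ∀ z ∈ D, ∀ a₁ b₁ a₂ b₂ : V d,
        normInf (a₁ - z) ≤ m' → normInf (b₁ - z) = n' → SConn (S ∩ ballInf z n') a₁ b₁ →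
        normInf (a₂ - z) ≤ m' → normInf (b₂ - z) = n' → SConn (S ∩ ballInf z n') a₂ b₂ →
        SConn (S ∩ ballInf z ρ) a₁ a₂) :
    ∀ x y : V d, x ∈ Vk S L → y ∈ Vk S L → x ∈ D → y ∈ D → SConn (S ∩ T) x y := by
  have hne : ∀ z ∈ D, (crossing S z m n).Nonempty := by
    intro z hz
    obtain ⟨a, b, haz, hbz, hab⟩ := ha z hz
    exact ⟨a, haz, b, hab.mono Set.inter_subset_left, hbz.ge⟩
  have huniq : ∀ z ∈ D, ∀ x ∈ crossing S z m' n', ∀ y ∈ crossing S z m' n',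
      SConn (S ∩ T) x y := by
    intro z hz x hx y hy
    obtain ⟨b₁, hb₁, hxb₁⟩ := exists_normInf_sub_eq_of_mem_crossing hmn hx
    obtain ⟨b₂, hb₂, hyb₂⟩ := exists_normInf_sub_eq_of_mem_crossing hmn hy
    exact (hb z hz x b₁ y b₂ hx.1 hb₁ hxb₁ hy.1 hb₂ hyb₂).mono
      (Set.inter_subset_inter_right S (hT z hz))
  have hcross : ∀ x ∈ Vk S L, x ∈ crossing S x m' n' := fun x hx ↦
    crossing_mono (Nat.zero_le m') le_rfl (mem_crossing_of_mem_Vk hL hx)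
  intro x y hx hy hxD hyD
  exact SConn.of_mem_crossing hD hm hn hne huniq hxD hyD (hcross x hx) (hcross y hy)

/-- **Deterministic connectivity lemma.** Let `R ≥ 1` with `εR ≥ 10` and
`k = ⌊εR/10⌋`.  Suppose for every `z ∈ [0,R)^d`:
(a) `B(z,k)` is connected to the boundary of `B(z,4k)` by a nearest-neighbour path in
`S`, and (b) every two nearest-neighbour paths in `S` from `B(z,2k)` to the boundary of
`B(z,3k)` lie in the same connected component of `S ∩ B(z,6k)`.  Then every pair of
vertices of `V^u_{εR} ∩ [0,R)^d` (computed for `S`) is connected within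
`S ∩ [-εR,(1+ε)R)^d`. -/
theorem vacant_connectivity_deterministic (d : ℕ) (hd : 3 ≤ d) (S : Set (V d))
    (ε : ℝ) (hε : 0 < ε) (R : ℕ) (hR : 1 ≤ R) (hεR : 10 ≤ ε * (R : ℝ))
    (k : ℕ) (hk : k = ⌊ε * (R : ℝ) / 10⌋₊)
    (ha : ∀ z : V d, z ∈ box0 d R → ∃ a b : V d,
        normInf (a - z) ≤ k ∧ normInf (b - z) = 4 * k ∧
        SConn (S ∩ ballInf z (4 * k)) a b)
    (hb : ∀ z : V d, z ∈ box0 d R → ∀ a₁ b₁ a₂ b₂ : V d,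
        normInf (a₁ - z) ≤ 2 * k → normInf (b₁ - z) = 3 * k →
        SConn (S ∩ ballInf z (3 * k)) a₁ b₁ →
        normInf (a₂ - z) ≤ 2 * k → normInf (b₂ - z) = 3 * k →
        SConn (S ∩ ballInf z (3 * k)) a₂ b₂ →
        SConn (S ∩ ballInf z (6 * k)) a₁ a₂) :
    ∀ x y : V d, x ∈ Vk S (ε * R) → y ∈ Vk S (ε * R) →
      x ∈ box0 d R → y ∈ box0 d R → SConn (S ∩ bigBox d ε R) x y := by
  have hk_pos : 0 < k := hk ▸ Nat.floor_pos.2 (by linarith)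
  have hk_le : k ≤ ε * R / 10 := hk ▸ Nat.floor_le (by positivity)
  exact vacant_connectivity_deterministic_general (starConnected_box0 d R) (by omega) (by omega)
    (by omega) (by push_cast; linarith)
    (fun z hz ↦ ballInf_subset_bigBox hz (by push_cast; linarith)) ha hb

end RIQ
end
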